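/- Fix an integer n ≥ 1. For every q ∈ ℝ^{n+1} and every 1 ≤ l ≤ n, 𝓗_l^{(n+1)}(q₁,…,q_{n+1}) = 𝓗_l^{(n)}(q₁,…,q_n) + 4·sinh²(q_{n+1}/2)·𝓗_{l−1}^{(n)}(q₁,…,q_n); and for every 1 ≤ k ≤ n, 𝓚_k^{(n+1)}(q₁,…,q_{n+1}) = 𝓚_k^{(n)}(q₁,…,q_n) − 2·cosh(q_{n+1})·𝓚_{k−1}^{(n)}(q₁,…,q_n) + 𝓚_{k−2}^{(n)}(q₁,…,q_n), with the conventions 𝓚₀^{(n)} = 1 and 𝓚_{−1}^{(n)} = 0. -/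

import Mathlib

/-- The action-angle transform `𝓗_l^{(n)}` of van Diejen's `l`-th commuting Hamiltonian
for the rational BC_n Ruijsenaars-Schneider system: the sum runs over all pairs of a
subset `J ⊆ {1,…,n}` with `|J| ≤ l` and a sign assignment `ε : J → {±1}`. -/
noncomputable def Hfam (n l : ℕ) (q : Fin n → ℝ) : ℝ :=
  ∑ J : Finset (Fin n), ∑ ε : {x // x ∈ J} → Bool,
    if J.card ≤ l then
      (-2 : ℝ) ^ (l - J.card) * ((n - J.card).choose (l - J.card) : ℝ) *
        Real.cosh (∑ j : {x // x ∈ J}, if ε j then q j.1 else -(q j.1))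
    else 0

/-- The action-angle transform `𝓚_m^{(n)}` of the `m`-th coefficient of the
characteristic polynomial of Pusztai's Lax matrix. -/
noncomputable def Kfam (n m : ℕ) (q : Fin n → ℝ) : ℝ :=
  (-1 : ℝ) ^ m *
    ∑ a ∈ Finset.range (m / 2 + 1), ∑ J : Finset (Fin n), ∑ ε : {x // x ∈ J} → Bool,
      if J.card = m - 2 * a then
        ((n - (m - 2 * a)).choose a : ℝ) *
          Real.cosh (∑ j : {x // x ∈ J}, if ε j then q j.1 else -(q j.1))
      else 0

lemma aux_exp {ι : Type*} [Fintype ι] [DecidableEq ι] (q : ι → ℝ) :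
    ∑ ε : ι → Bool, Real.exp (∑ j, if ε j then q j else -(q j)) = ∏ j, (2 * Real.cosh (q j)) := by
  have h : ∀ j, 2 * Real.cosh (q j) =
      ∑ b ∈ (Finset.univ : Finset Bool), Real.exp (if b then q j else -(q j)) := by
    intro j
    rw [Real.cosh_eq]
    simp
    ring
  simp_rw [h]
  rw [Finset.prod_univ_sum]
  rw [Fintype.piFinset_univ]
  simp only [Real.exp_sum]

lemma aux_cosh {ι : Type*} [Fintype ι] [DecidableEq ι] (q : ι → ℝ) :
    ∑ ε : ι → Bool, Real.cosh (∑ j, if ε j then q j else -(q j)) = ∏ j, (2 * Real.cosh (q j)) := by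
  have h1 := aux_exp q
  have h2 := aux_exp (fun j => -(q j))
  simp only [Real.cosh_neg] at h2
  have h3 : ∀ ε : ι → Bool, Real.cosh (∑ j, if ε j then q j else -(q j)) =
      (Real.exp (∑ j, if ε j then q j else -(q j)) +
        Real.exp (∑ j, if ε j then -(q j) else -(-(q j)))) / 2 := by
    intro ε
    rw [Real.cosh_eq, ← Finset.sum_neg_distrib]
    congr 4
    funext j
    split_ifs <;> rfl
  simp_rw [h3]
  rw [← Finset.sum_div, Finset.sum_add_distrib, h1, h2]
  ring

lemma aux_J {n : ℕ} (q : Fin n → ℝ) (J : Finset (Fin n)) :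
    ∑ ε : {x // x ∈ J} → Bool,
      Real.cosh (∑ j : {x // x ∈ J}, if ε j then q j.1 else -(q j.1)) =
      ∏ j ∈ J, (2 * Real.cosh (q j)) := by
  rw [aux_cosh (fun j : {x // x ∈ J} => q j.1)]
  exact Finset.prod_coe_sort J (fun j => 2 * Real.cosh (q j))

open Polynomial in
lemma aux_pow1 (N k : ℕ) : ((1 - 2 * X : ℝ[X]) ^ N).coeff k = (-2) ^ k * (N.choose k : ℝ) := by
  have : (1 - 2 * X : ℝ[X]) ^ N = ((1 + X) ^ N : ℝ[X]).comp (C (-2) * X) := by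
    have h2 : (C (-2) : ℝ[X]) = -2 := by rw [C_neg]; rfl
    rw [h2]
    simp
    ring
  rw [this, comp_C_mul_X_coeff, coeff_one_add_X_pow]
  ring

open Polynomial in
lemma aux_pow2 (N k : ℕ) : ((1 + X ^ 2 : ℝ[X]) ^ N).coeff k =
    if 2 ∣ k then (N.choose (k / 2) : ℝ) else 0 := by
  have : (1 + X ^ 2 : ℝ[X]) ^ N = expand ℝ 2 ((1 + X) ^ N) := by
    simp
  rw [this, coeff_expand (by norm_num), coeff_one_add_X_pow]

open Polynomial in
lemma Hfam_eq (n l : ℕ) (q : Fin n → ℝ) :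
    Hfam n l q = (∏ j, (C (2 * Real.cosh (q j)) * X + (1 - 2 * X)) : ℝ[X]).coeff l := by
  rw [Finset.prod_add, Finset.powerset_univ, finsetSum_coeff]
  unfold Hfam
  apply Finset.sum_congr rfl
  intro J _
  rw [Finset.prod_mul_distrib, ← map_prod, Finset.prod_const, Finset.prod_const, mul_assoc,
    coeff_C_mul, coeff_X_pow_mul', aux_pow1, ← aux_J, Finset.card_univ_sdiff, Fintype.card_fin]
  split_ifs with h
  · rw [← Finset.mul_sum]
    ring
  · simp

open Polynomial in
lemma Kfam_eq (n m : ℕ) (q : Fin n → ℝ) :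
    Kfam n m q = (∏ j, (C (-(2 * Real.cosh (q j))) * X + (1 + X ^ 2)) : ℝ[X]).coeff m := by
  rw [Finset.prod_add, Finset.powerset_univ, finsetSum_coeff]
  unfold Kfam
  rw [Finset.sum_comm, Finset.mul_sum]
  apply Finset.sum_congr rfl
  intro J _
  rw [Finset.prod_mul_distrib, ← map_prod, Finset.prod_const, Finset.prod_const, mul_assoc,
    coeff_C_mul, coeff_X_pow_mul', aux_pow2, Finset.prod_neg, ← aux_J, Finset.card_univ_sdiff,
    Fintype.card_fin]
  by_cases h : J.card ≤ m ∧ 2 ∣ m - J.card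
  · obtain ⟨h1, b, hb⟩ := h
    have hm : m = J.card + 2 * b := by omega
    rw [Finset.sum_eq_single b]
    · have e1 : J.card = m - 2 * b := by omega
      have e2 : (m - J.card) / 2 = b := by omega
      have e3 : (-1 : ℝ) ^ m = (-1) ^ J.card := by
        rw [hm, pow_add, pow_mul]; simp
      rw [if_pos h1, if_pos ⟨b, hb⟩, e2, e3, ← e1]
      simp only [if_true]
      rw [← Finset.mul_sum]
      ring
    · intro a ha hab
      rw [Finset.mem_range] at ha
      have : ¬ J.card = m - 2 * a := by omega
      simp [this]
    · intro hb'
      rw [Finset.mem_range] at hb'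
      omega
  · rw [Finset.sum_eq_zero]
    · by_cases h1 : J.card ≤ m
      · have h2 : ¬ 2 ∣ m - J.card := fun h2 => h ⟨h1, h2⟩
        simp [h2]
      · simp [h1]
    · intro a ha
      rw [Finset.mem_range] at ha
      have : ¬ J.card = m - 2 * a := by
        intro h'
        exact h ⟨by omega, a, by omega⟩
      simp [this]

/-- The recursions (2.243) and (2.244) of the thesis for the families `𝓗` and `𝓚`,
with the conventions `𝓚₀ = 1` and `𝓚₋₁ = 0`. -/
theorem stmt8 (n : ℕ) (hn : 1 ≤ n) (q : Fin (n + 1) → ℝ) :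
    (∀ l, 1 ≤ l → l ≤ n →
      Hfam (n + 1) l q =
        Hfam n l (q ∘ Fin.castSucc) +
          4 * Real.sinh (q (Fin.last n) / 2) ^ 2 * Hfam n (l - 1) (q ∘ Fin.castSucc)) ∧
      (∀ k, 1 ≤ k → k ≤ n →
        Kfam (n + 1) k q =
          Kfam n k (q ∘ Fin.castSucc) -
            2 * Real.cosh (q (Fin.last n)) * Kfam n (k - 1) (q ∘ Fin.castSucc) +
            if 2 ≤ k then Kfam n (k - 2) (q ∘ Fin.castSucc) else 0) := by
  constructor
  · intro l hl _
    obtain ⟨l, rfl⟩ : ∃ k, l = k + 1 := ⟨l - 1, by omega⟩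
    simp only [Hfam_eq, Function.comp_apply, Nat.add_sub_cancel]
    rw [Fin.prod_univ_castSucc]
    generalize (∏ j : Fin n, (Polynomial.C (2 * Real.cosh (q j.castSucc)) * Polynomial.X +
      (1 - 2 * Polynomial.X)) : Polynomial ℝ) = P
    have hs : 4 * Real.sinh (q (Fin.last n) / 2) ^ 2 = 2 * Real.cosh (q (Fin.last n)) - 2 := by
      have h1 := Real.cosh_two_mul (q (Fin.last n) / 2)
      have h2 := Real.cosh_sq (q (Fin.last n) / 2)
      rw [mul_div_cancel₀ _ (by norm_num : (2 : ℝ) ≠ 0)] at h1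
      linarith
    rw [hs]
    have e : P * (Polynomial.C (2 * Real.cosh (q (Fin.last n))) * Polynomial.X +
        (1 - 2 * Polynomial.X)) =
        P + Polynomial.C (2 * Real.cosh (q (Fin.last n)) - 2) * (P * Polynomial.X) := by
      rw [Polynomial.C_sub, show (Polynomial.C (2 : ℝ)) = 2 from rfl]
      ring
    rw [e, Polynomial.coeff_add, Polynomial.coeff_C_mul, Polynomial.coeff_mul_X]
  · intro k hk _
    obtain ⟨k, rfl⟩ : ∃ j, k = j + 1 := ⟨k - 1, by omega⟩
    simp only [Kfam_eq, Function.comp_apply, Nat.add_sub_cancel]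
    rw [Fin.prod_univ_castSucc]
    generalize (∏ j : Fin n, (Polynomial.C (-(2 * Real.cosh (q j.castSucc))) * Polynomial.X +
      (1 + Polynomial.X ^ 2)) : Polynomial ℝ) = P
    have e : P * (Polynomial.C (-(2 * Real.cosh (q (Fin.last n)))) * Polynomial.X +
        (1 + Polynomial.X ^ 2)) =
        P + Polynomial.C (-(2 * Real.cosh (q (Fin.last n)))) * (P * Polynomial.X) +
          P * Polynomial.X ^ 2 := by
      ring
    rw [e, Polynomial.coeff_add, Polynomial.coeff_add, Polynomial.coeff_C_mul,
      Polynomial.coeff_mul_X, Polynomial.coeff_mul_X_pow']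
    ring
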